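/- Every finite simple graph G with m edges admits a 3-partition (V_1, V_2, V_3) such that for every i ∈ {1, 2, 3}: 6·e(V_i) + (3/2)·Σ_{j≠i} e(V_j) ≤ m. -/

import Mathlib

open Finset

noncomputable def hfun (x : ℝ) : ℝ := Real.sqrt (2 * x + 1 / 4) - 1 / 2

variable {V : Type*} [Fintype V] [DecidableEq V]

/-- Number of edges of `G` with both endpoints in `S`. -/
def eIn (G : SimpleGraph V) [DecidableRel G.Adj] (S : Finset V) : ℕ :=
  (Finset.univ.filter (fun p : V × V => G.Adj p.1 p.2 ∧ p.1 ∈ S ∧ p.2 ∈ S)).card / 2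

/-- Number of edges of `G` with one endpoint in `S` and the other in `T` (for disjoint `S`, `T`). -/
def eCross (G : SimpleGraph V) [DecidableRel G.Adj] (S T : Finset V) : ℕ :=
  (Finset.univ.filter (fun p : V × V => G.Adj p.1 p.2 ∧ p.1 ∈ S ∧ p.2 ∈ T)).card

/-- `P` is a partition of the vertex set into `k` pairwise disjoint (possibly empty) parts. -/
def IsKPartition {k : ℕ} (P : Fin k → Finset V) : Prop :=
  (∀ i j : Fin k, i ≠ j → Disjoint (P i) (P j)) ∧ ∀ v : V, ∃ i, v ∈ P i

/-- The number of crossing edges of a `k`-partition. -/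
def crossTotal (G : SimpleGraph V) [DecidableRel G.Adj] {k : ℕ} (P : Fin k → Finset V) : ℕ :=
  ∑ i : Fin k, ∑ j : Fin k, if i < j then eCross G (P i) (P j) else 0

/-- `f_k(G)`: the maximum number of crossing edges over all `k`-partitions of `G`. -/
noncomputable def maxCut (G : SimpleGraph V) [DecidableRel G.Adj] (k : ℕ) : ℕ :=
  sSup {n : ℕ | ∃ P : Fin k → Finset V, IsKPartition P ∧ crossTotal G P = n}

set_option linter.unusedSectionVars false

section Aux

/-- degree of `v` into `S` -/
def dg {V : Type*} (a : V → V → ℤ) (v : V) (S : Finset V) : ℤ := ∑ y ∈ S, a v y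

def qq {V : Type*} (a : V → V → ℤ) (S T : Finset V) : ℤ := ∑ x ∈ S, dg a x T

def Part3 {V : Type*} [Fintype V] [DecidableEq V] (X Y Z : Finset V) : Prop :=
  Disjoint X Y ∧ Disjoint X Z ∧ Disjoint Y Z ∧ X ∪ Y ∪ Z = Finset.univ

def EE {V : Type*} (a : V → V → ℤ) (X Y Z : Finset V) : ℤ := qq a X X + qq a Y Y + qq a Z Z

def Viol {V : Type*} [Fintype V] (a : V → V → ℤ) (S X Y Z : Finset V) : Prop :=
  2 * qq a Finset.univ Finset.univ < 9 * qq a S S + 3 * EE a X Y Z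

def Emin {V : Type*} [Fintype V] [DecidableEq V] (a : V → V → ℤ) (X Y Z : Finset V) : Prop :=
  Part3 X Y Z ∧ ∀ X' Y' Z' : Finset V, Part3 X' Y' Z' → EE a X Y Z ≤ EE a X' Y' Z'

def Wmin {V : Type*} [Fintype V] [DecidableEq V] (a : V → V → ℤ) (X Y Z : Finset V) : Prop :=
  Part3 X Y Z ∧ ∀ Y' Z' : Finset V, Part3 X Y' Z' → EE a X Y Z ≤ EE a X Y' Z'

variable {W : Type*} [Fintype W] [DecidableEq W] (a : W → W → ℤ)

lemma Part3.swap12 {X Y Z : Finset W} (h : Part3 X Y Z) : Part3 Y X Z := by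
  obtain ⟨h1, h2, h3, h4⟩ := h
  exact ⟨h1.symm, h3, h2, by rw [← h4, Finset.union_comm Y X]⟩

lemma Part3.swap23 {X Y Z : Finset W} (h : Part3 X Y Z) : Part3 X Z Y := by
  obtain ⟨h1, h2, h3, h4⟩ := h
  exact ⟨h2, h1, h3.symm, by rw [← h4, Finset.union_right_comm]⟩

lemma Part3.move {X Y Z : Finset W} (h : Part3 X Y Z) (v : W) (hv : v ∈ X) :
    Part3 (X.erase v) (insert v Y) Z := by
  obtain ⟨h1, h2, h3, h4⟩ := h
  rw [Finset.disjoint_left] at h1 h2 h3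
  refine ⟨?_, ?_, ?_, ?_⟩
  · rw [Finset.disjoint_left]; intro x; have := @h1 x; simp; tauto
  · rw [Finset.disjoint_left]; intro x; have := @h2 x; simp; tauto
  · rw [Finset.disjoint_left]; intro x hx hz
    rcases Finset.mem_insert.1 hx with rfl | hx
    · exact h2 hv hz
    · exact h3 hx hz
  · ext x
    have : x ∈ X ∪ Y ∪ Z := by rw [h4]; simp
    simp at this ⊢
    tauto

lemma Part3.back {X Y Z : Finset W} (v : W) (h : Part3 (X.erase v) Y Z) (hv : v ∈ X) :
    Part3 X (Y.erase v) (Z.erase v) := by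
  obtain ⟨h1, h2, h3, h4⟩ := h
  rw [Finset.disjoint_left] at h1 h2 h3
  refine ⟨?_, ?_, ?_, ?_⟩
  · rw [Finset.disjoint_left]; intro x; have := @h1 x; simp at this ⊢; tauto
  · rw [Finset.disjoint_left]; intro x; have := @h2 x; simp at this ⊢; tauto
  · rw [Finset.disjoint_left]; intro x; have := @h3 x; simp at this ⊢; tauto
  · ext x
    have : x ∈ X.erase v ∪ Y ∪ Z := by rw [h4]; simp
    by_cases hx : x = v
    · subst hx; simp [hv]
    · simp [hx] at this ⊢
      tauto

lemma dg_part {X Y Z : Finset W} (h : Part3 X Y Z) (v : W) :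
    dg a v Finset.univ = dg a v X + dg a v Y + dg a v Z := by
  obtain ⟨h1, h2, h3, h4⟩ := h
  unfold dg
  rw [← h4, Finset.sum_union (Finset.disjoint_union_left.2 ⟨h2, h3⟩), Finset.sum_union h1]

lemma qq_part_left {X Y Z : Finset W} (h : Part3 X Y Z) (T : Finset W) :
    qq a Finset.univ T = qq a X T + qq a Y T + qq a Z T := by
  obtain ⟨h1, h2, h3, h4⟩ := h
  unfold qq
  rw [← h4, Finset.sum_union (Finset.disjoint_union_left.2 ⟨h2, h3⟩), Finset.sum_union h1]

lemma qq_part_right {X Y Z : Finset W} (h : Part3 X Y Z) (T : Finset W) :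
    qq a T Finset.univ = qq a T X + qq a T Y + qq a T Z := by
  unfold qq
  rw [← Finset.sum_add_distrib, ← Finset.sum_add_distrib]
  exact Finset.sum_congr rfl (fun v _ => dg_part a h v)

variable (hs : ∀ x y, a x y = a y x) (hd : ∀ x, a x x = 0) (h0 : ∀ x y, 0 ≤ a x y)
  (h1 : ∀ x y, a x y ≤ 1)

include hs in
lemma qq_comm (S T : Finset W) : qq a S T = qq a T S := by
  unfold qq dg
  rw [Finset.sum_comm]
  exact Finset.sum_congr rfl (fun x _ => Finset.sum_congr rfl (fun y _ => hs _ _))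

lemma dg_insert {v : W} {S : Finset W} (hv : v ∉ S) (x : W) :
    dg a x (insert v S) = dg a x S + a x v := by
  unfold dg; rw [Finset.sum_insert hv, add_comm]

lemma qq_insert_left {v : W} {S : Finset W} (hv : v ∉ S) (T : Finset W) :
    qq a (insert v S) T = qq a S T + dg a v T := by
  unfold qq; rw [Finset.sum_insert hv, add_comm]

include hs in
lemma qq_insert_right {v : W} {S : Finset W} (hv : v ∉ S) (T : Finset W) :
    qq a T (insert v S) = qq a T S + dg a v T := by
  rw [qq_comm a hs, qq_insert_left a hv, qq_comm a hs]

include hd in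
lemma dg_insert_self {v : W} {S : Finset W} (hv : v ∉ S) :
    dg a v (insert v S) = dg a v S := by
  rw [dg_insert a hv, hd, add_zero]

include hs hd in
lemma qq_insert_insert {v : W} {S : Finset W} (hv : v ∉ S) :
    qq a (insert v S) (insert v S) = qq a S S + 2 * dg a v S := by
  rw [qq_insert_left a hv, qq_insert_right a hs hv, dg_insert_self a hd hv]; ring

include hd in
lemma dg_erase_self (v : W) (S : Finset W) : dg a v (S.erase v) = dg a v S := by
  by_cases hv : v ∈ S
  · conv_rhs => rw [← Finset.insert_erase hv]
    rw [dg_insert_self a hd (Finset.notMem_erase v S)]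
  · rw [Finset.erase_eq_of_notMem hv]

include hs hd in
lemma qq_erase {v : W} {S : Finset W} (hv : v ∈ S) :
    qq a (S.erase v) (S.erase v) = qq a S S - 2 * dg a v S := by
  have := qq_insert_insert a hs hd (Finset.notMem_erase v S)
  rw [Finset.insert_erase hv, dg_erase_self a hd] at this
  linarith

include h0 in
lemma dg_nonneg (v : W) (S : Finset W) : 0 ≤ dg a v S := Finset.sum_nonneg (fun _ _ => h0 _ _)

include h0 in
lemma qq_nonneg (S T : Finset W) : 0 ≤ qq a S T := Finset.sum_nonneg (fun _ _ => dg_nonneg a h0 _ _)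

include hs hd h0 in
lemma qq_erase_le (v : W) (S : Finset W) : qq a (S.erase v) (S.erase v) ≤ qq a S S := by
  by_cases hv : v ∈ S
  · rw [qq_erase a hs hd hv]; linarith [dg_nonneg a h0 v S]
  · rw [Finset.erase_eq_of_notMem hv]

include hs hd in
lemma EE_move {X Y Z : Finset W} (h : Part3 X Y Z) {v : W} (hv : v ∈ X) :
    EE a (X.erase v) (insert v Y) Z = EE a X Y Z - 2 * dg a v X + 2 * dg a v Y := by
  have hvY : v ∉ Y := Finset.disjoint_left.1 h.1 hv
  unfold EE
  rw [qq_erase a hs hd hv, qq_insert_insert a hs hd hvY]; ring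

lemma EE_swap12 (X Y Z : Finset W) : EE a Y X Z = EE a X Y Z := by unfold EE; ring

lemma EE_swap23 (X Y Z : Finset W) : EE a X Z Y = EE a X Y Z := by unfold EE; ring

lemma Emin.swap12 {X Y Z : Finset W} (h : Emin a X Y Z) : Emin a Y X Z :=
  ⟨h.1.swap12, fun X' Y' Z' h' => by rw [EE_swap12]; exact h.2 _ _ _ h'⟩

lemma Emin.swap23 {X Y Z : Finset W} (h : Emin a X Y Z) : Emin a X Z Y :=
  ⟨h.1.swap23, fun X' Y' Z' h' => by rw [EE_swap23]; exact h.2 _ _ _ h'⟩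

lemma Wmin.swap23 {X Y Z : Finset W} (h : Wmin a X Y Z) : Wmin a X Z Y :=
  ⟨h.1.swap23, fun Y' Z' h' => by rw [EE_swap23]; exact h.2 _ _ h'⟩

lemma Emin.wmin {X Y Z : Finset W} (h : Emin a X Y Z) : Wmin a X Y Z :=
  ⟨h.1, fun _ _ h' => h.2 _ _ _ h'⟩

include hs hd in
lemma Emin.dg_le {X Y Z : Finset W} (h : Emin a X Y Z) {v : W} (hv : v ∈ X) :
    dg a v X ≤ dg a v Y := by
  have := h.2 _ _ _ (h.1.move v hv)
  rw [EE_move a hs hd h.1 hv] at this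
  linarith

include hs hd in
lemma Emin.qq_le {X Y Z : Finset W} (h : Emin a X Y Z) : qq a X X ≤ qq a X Y :=
  Finset.sum_le_sum (fun _ hv => h.dg_le a hs hd hv)

include hs hd in
lemma Wmin.qq_le {X Y Z : Finset W} (h : Wmin a X Y Z) : qq a Y Y ≤ qq a Y Z := by
  refine Finset.sum_le_sum (fun v hv => ?_)
  have hp : Part3 Y Z X := h.1.swap12.swap23
  have := h.2 _ _ (hp.move v hv).swap23.swap12
  have h2 := EE_move a hs hd hp hv
  unfold EE at *
  linarith

include hs hd in
lemma Emin.qq_le_insert {X Y Z : Finset W} {v : W} (hv : v ∉ X) (h : Emin a (insert v X) Y Z) :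
    qq a X X + dg a v X ≤ qq a X Y := by
  rw [← qq_insert_right a hs hv]
  exact Finset.sum_le_sum (fun x hx => h.dg_le a hs hd (Finset.mem_insert_of_mem hx))

include hs in
lemma total {X Y Z : Finset W} (h : Part3 X Y Z) :
    qq a Finset.univ Finset.univ =
      EE a X Y Z + 2 * (qq a X Y + qq a X Z + qq a Y Z) := by
  rw [qq_part_left a h, qq_part_right a h X, qq_part_right a h Y, qq_part_right a h Z,
    qq_comm a hs Y X, qq_comm a hs Z X, qq_comm a hs Z Y]
  unfold EE; ring

include hs hd h0 in
lemma stage1 {X Y Z : Finset W} (h : Emin a X Y Z) (hX : Viol a X X Y Z) {v : W} (hv : v ∈ X)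
    (hY : dg a v Y = dg a v X) (hZ : dg a v Z = dg a v X)
    (c1 : Viol a (insert v Y) (X.erase v) (insert v Y) Z ∨ Viol a Z (X.erase v) (insert v Y) Z)
    (c2 : Viol a (insert v Z) (X.erase v) (insert v Z) Y ∨ Viol a Y (X.erase v) (insert v Z) Y) :
    False := by
  have hvY : v ∉ Y := Finset.disjoint_left.1 h.1.1 hv
  have hvZ : v ∉ Z := Finset.disjoint_left.1 h.1.2.1 hv
  have hvX : v ∉ X.erase v := Finset.notMem_erase v X
  have e1 := EE_move a hs hd h.1 hv
  have e2 := EE_move a hs hd h.1.swap23 hv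
  have m1 : Emin a (X.erase v) (insert v Y) Z :=
    ⟨h.1.move v hv, fun _ _ _ h' => by rw [e1, hY]; linarith [h.2 _ _ _ h']⟩
  have m2 : Emin a (X.erase v) (insert v Z) Y :=
    ⟨h.1.swap23.move v hv, fun _ _ _ h' => by
      rw [e2, hZ, EE_swap23]; linarith [h.2 _ _ _ h']⟩
  have h' : Emin a (insert v (X.erase v)) Y Z := by rwa [Finset.insert_erase hv]
  have i1 := h'.qq_le_insert a hs hd hvX
  have i2 := (h'.swap23).qq_le_insert a hs hd hvX
  have i3 := (m1.swap12).qq_le_insert a hs hd hvY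
  have i4 := (m1.swap12.swap23).qq_le_insert a hs hd hvY
  have i5 := (m2.swap12).qq_le_insert a hs hd hvZ
  have i6 := (m2.swap12.swap23).qq_le_insert a hs hd hvZ
  have j1 := h.qq_le a hs hd
  have j2 := h.swap23.qq_le a hs hd
  have j3 := h.swap12.qq_le a hs hd
  have j4 := h.swap12.swap23.qq_le a hs hd
  have j5 := h.swap23.swap12.qq_le a hs hd
  have j6 := h.swap23.swap12.swap23.qq_le a hs hd
  have t := total a hs h.1
  have s1 := qq_erase a hs hd hv
  have s2 := qq_insert_insert a hs hd hvY
  have s3 := qq_insert_insert a hs hd hvZ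
  have r1 := qq_insert_left a hvX Y
  have r2 := qq_insert_left a hvX Z
  rw [Finset.insert_erase hv] at r1 r2
  rw [dg_erase_self a hd] at i1 i2
  rw [qq_comm a hs Y (X.erase v)] at i3
  rw [qq_comm a hs Z (X.erase v)] at i5
  rw [qq_comm a hs Z Y] at i6 j6
  rw [qq_comm a hs Y X] at j3
  rw [qq_comm a hs Z X] at j5
  have := dg_nonneg a h0 v X
  have e3 : EE a X Z Y = EE a X Y Z := EE_swap23 a X Y Z
  have e4 : EE a X Y Z = qq a X X + qq a Y Y + qq a Z Z := rfl
  unfold Viol at hX c1 c2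
  rcases c1 with c1 | c1 <;> rcases c2 with c2 | c2 <;> linarith

include hs hd h0 h1 in
lemma stage2 {X Y Z A B : Finset W} (h : Wmin a X Y Z) (hX : Viol a X X Y Z)
    (hsl : ∀ v ∈ X, 3 * dg a v X + 1 ≤ dg a v Finset.univ) {v : W} (hv : v ∈ X)
    (h' : Wmin a (X.erase v) A B) (hA : Viol a A (X.erase v) A B) : False := by
  have hvX : v ∉ X.erase v := Finset.notMem_erase v X
  have k1 := h.qq_le a hs hd
  have k2 := (h.swap23).qq_le a hs hd
  have k3 := h'.qq_le a hs hd
  have k4 := (h'.swap23).qq_le a hs hd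
  have J := h.2 _ _ (h'.1.back v hv)
  have a1 := qq_erase_le a hs hd h0 v A
  have a2 := qq_erase_le a hs hd h0 v B
  have s1 := qq_erase a hs hd hv
  have t1 := total a hs h.1
  have t2 := total a hs h'.1
  have p1 := qq_part_right a h.1 X
  have p2 := qq_part_right a h'.1 (X.erase v)
  have r1 := qq_insert_left a hvX Finset.univ
  rw [Finset.insert_erase hv] at r1
  have c1 : dg a v X ≤ (X.erase v).card := by
    rw [← dg_erase_self a hd]
    unfold dg
    calc _ ≤ ∑ y ∈ X.erase v, (1 : ℤ) := Finset.sum_le_sum (fun _ _ => h1 _ _)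
      _ = _ := by simp
  have c2 : 3 * qq a (X.erase v) X + (X.erase v).card ≤ qq a (X.erase v) Finset.univ := by
    unfold qq
    rw [Finset.mul_sum, Finset.card_eq_sum_ones, Nat.cast_sum, ← Finset.sum_add_distrib]
    exact Finset.sum_le_sum (fun x hx => by
      have := hsl x (Finset.mem_of_mem_erase hx); simpa using this)
  have r2 := qq_insert_left a hvX X
  rw [Finset.insert_erase hv] at r2
  have c3 := hsl v hv
  rw [qq_comm a hs Z Y] at k2
  rw [qq_comm a hs B A] at k4
  have := dg_nonneg a h0 v X
  unfold Viol at hX hA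
  unfold EE at *
  linarith

include hs hd h0 h1 in
theorem core : ∃ X Y Z : Finset W, Part3 X Y Z ∧ ¬ Viol a X X Y Z ∧ ¬ Viol a Y X Y Z ∧
    ¬ Viol a Z X Y Z := by
  classical
  by_contra hno
  push Not at hno
  have hno' : ∀ X Y Z : Finset W, Part3 X Y Z →
      Viol a X X Y Z ∨ Viol a Y X Y Z ∨ Viol a Z X Y Z := by
    intro X Y Z h
    have := hno X Y Z h
    tauto
  -- global minimum of E with X violating
  let U : Finset (Finset W × Finset W × Finset W) := Finset.univ
  obtain ⟨P0, hP0, hmin0⟩ := Finset.exists_min_image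
    (U.filter (fun p => Part3 p.1 p.2.1 p.2.2)) (fun p => EE a p.1 p.2.1 p.2.2)
    ⟨(Finset.univ, ∅, ∅), by simp [U, Part3]⟩
  have hE0 : Emin a P0.1 P0.2.1 P0.2.2 :=
    ⟨(Finset.mem_filter.1 hP0).2, fun X' Y' Z' h' => hmin0 (X', Y', Z') (by simp [U, h'])⟩
  have hex : ∃ X Y Z : Finset W, Emin a X Y Z ∧ Viol a X X Y Z := by
    rcases hno' _ _ _ hE0.1 with h | h | h
    · exact ⟨_, _, _, hE0, h⟩
    · exact ⟨_, _, _, hE0.swap12, by unfold Viol at *; rwa [EE_swap12]⟩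
    · exact ⟨_, _, _, hE0.swap23.swap12, by unfold Viol at *; rwa [EE_swap12, EE_swap23]⟩
  obtain ⟨X1, Y1, Z1, hE1, hV1⟩ := hex
  obtain ⟨P, hP, hmin⟩ := Finset.exists_min_image
    (U.filter (fun p => Emin a p.1 p.2.1 p.2.2 ∧ Viol a p.1 p.1 p.2.1 p.2.2))
    (fun p => p.1.card) ⟨(X1, Y1, Z1), by simp [U, hE1, hV1]⟩
  obtain ⟨X, Y, Z⟩ := P
  obtain ⟨hE, hV⟩ := (Finset.mem_filter.1 hP).2
  simp only at hE hV
  have hmin' : ∀ X' Y' Z', Emin a X' Y' Z' → Viol a X' X' Y' Z' → X.card ≤ X'.card :=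
    fun X' Y' Z' h h' => hmin (X', Y', Z') (by simp [U, h, h'])
  have key : ∀ Y Z : Finset W, Emin a X Y Z → ∀ v ∈ X, dg a v Y = dg a v X →
      Viol a (insert v Y) (X.erase v) (insert v Y) Z ∨ Viol a Z (X.erase v) (insert v Y) Z := by
    intro Y Z hE v hv hY
    have e1 := EE_move a hs hd hE.1 hv
    have m1 : Emin a (X.erase v) (insert v Y) Z :=
      ⟨hE.1.move v hv, fun _ _ _ h' => by rw [e1, hY]; linarith [hE.2 _ _ _ h']⟩
    rcases hno' _ _ _ m1.1 with h | h
    · have := hmin' _ _ _ m1 h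
      have := Finset.card_erase_lt_of_mem hv
      omega
    · exact h
  have hsl : ∀ v ∈ X, 3 * dg a v X + 1 ≤ dg a v Finset.univ := by
    intro v hv
    rw [dg_part a hE.1]
    have l1 := hE.dg_le a hs hd hv
    have l2 := hE.swap23.dg_le a hs hd hv
    by_contra hc
    have hY : dg a v Y = dg a v X := by omega
    have hZ : dg a v Z = dg a v X := by omega
    exact stage1 a hs hd h0 hE hV hv hY hZ (key _ _ hE v hv hY) (key _ _ hE.swap23 v hv hZ)
  obtain ⟨P, hP, hmin⟩ := Finset.exists_min_image
    (U.filter (fun p => Wmin a p.1 p.2.1 p.2.2 ∧ Viol a p.1 p.1 p.2.1 p.2.2 ∧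
      ∀ v ∈ p.1, 3 * dg a v p.1 + 1 ≤ dg a v Finset.univ))
    (fun p => p.1.card) ⟨(X, Y, Z), by
      refine Finset.mem_filter.2 ⟨Finset.mem_univ _, hE.wmin, hV, hsl⟩⟩
  clear hmin' key hsl hE hV
  obtain ⟨X, Y, Z⟩ := P
  obtain ⟨hE, hV, hsl⟩ := (Finset.mem_filter.1 hP).2
  simp only at hE hV hsl
  rcases X.eq_empty_or_nonempty with rfl | ⟨v, hv⟩
  · have k1 := hE.qq_le a hs hd
    have k2 := (hE.swap23).qq_le a hs hd
    rw [qq_comm a hs Z Y] at k2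
    have t1 := total a hs hE.1
    have n := qq_nonneg a h0 Y Z
    unfold Viol EE at *
    simp [qq] at *
    linarith
  · obtain ⟨P0, hP0, hmin0⟩ := Finset.exists_min_image
      (U.filter (fun p => p.1 = X.erase v ∧ Part3 p.1 p.2.1 p.2.2))
      (fun p => EE a p.1 p.2.1 p.2.2)
      ⟨(X.erase v, insert v Y, Z), by simp [U, hE.1.move v hv]⟩
    obtain ⟨X', A, B⟩ := P0
    obtain ⟨hX', hp⟩ := (Finset.mem_filter.1 hP0).2
    simp only at hX' hp
    subst hX'
    have hW : Wmin a (X.erase v) A B :=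
      ⟨hp, fun Y' Z' h' => hmin0 (X.erase v, Y', Z') (by simp [U, h'])⟩
    rcases hno' _ _ _ hp with h | h | h
    · have := hmin (X.erase v, A, B) (Finset.mem_filter.2 ⟨Finset.mem_univ _, hW, h, by
        intro x hx
        have e := hsl x (Finset.mem_of_mem_erase hx)
        have : dg a x (X.erase v) ≤ dg a x X :=
          Finset.sum_le_sum_of_subset_of_nonneg (Finset.erase_subset v X) (fun _ _ _ => h0 _ _)
        simp only
        linarith⟩)
      have := Finset.card_erase_lt_of_mem hv
      simp only at *
      omega
    · exact stage2 a hs hd h0 h1 hE hV hsl hv hW h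
    · exact stage2 a hs hd h0 h1 hE hV hsl hv hW.swap23
        (by unfold Viol at *; rwa [EE_swap23])

end Aux

/-- Every graph with `m` edges admits a 3-partition such that every part `Vᵢ` satisfies
`6·e(Vᵢ) + (3/2)·∑_{j≠i} e(Vⱼ) ≤ m`. -/
theorem stmt_5 {V : Type*} [Fintype V] [DecidableEq V]
    (G : SimpleGraph V) [DecidableRel G.Adj] (m : ℕ) (hm : m = G.edgeFinset.card) :
    ∃ P : Fin 3 → Finset V, IsKPartition P ∧
      ∀ i : Fin 3,
        6 * (eIn G (P i) : ℝ) + (3 / 2) * ∑ j ∈ Finset.univ.filter (· ≠ i), (eIn G (P j) : ℝ)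
          ≤ (m : ℝ) := by
  let a : V → V → ℤ := fun x y => if G.Adj x y then 1 else 0
  obtain ⟨X, Y, Z, hp, hX, hY, hZ⟩ := core a (by intro x y; simp [a, G.adj_comm])
    (by simp [a]) (by intro x y; simp only [a]; split_ifs <;> simp)
    (by intro x y; simp only [a]; split_ifs <;> simp)
  have hq : ∀ S : Finset V, 2 * (eIn G S : ℤ) ≤ qq a S S := by
    intro S
    have : qq a S S = ((Finset.univ.filter
        (fun p : V × V => G.Adj p.1 p.2 ∧ p.1 ∈ S ∧ p.2 ∈ S)).card : ℤ) := by
      unfold qq dg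
      rw [← Finset.sum_product', Finset.card_filter, Nat.cast_sum,
        ← Finset.sum_subset (Finset.subset_univ (S ×ˢ S))]
      · refine Finset.sum_congr rfl (fun p hp => ?_)
        rw [Finset.mem_product] at hp
        simp [a, hp.1, hp.2]
      · intro p _ hp
        rw [Finset.mem_product] at hp
        simp; tauto
    rw [this]
    unfold eIn
    omega
  have hM : qq a Finset.univ Finset.univ = 2 * (m : ℤ) := by
    rw [hm]
    have := G.sum_degrees_eq_twice_card_edges
    rw [← Nat.cast_ofNat, ← Nat.cast_mul, ← this, Nat.cast_sum]
    unfold qq dg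
    refine Finset.sum_congr rfl (fun v _ => ?_)
    simp [a, ← SimpleGraph.card_neighborFinset_eq_degree, SimpleGraph.neighborFinset_eq_filter]
  unfold Viol EE at hX hY hZ
  rw [hM] at hX hY hZ
  have q1 := hq X
  have q2 := hq Y
  have q3 := hq Z
  refine ⟨![X, Y, Z], ⟨?_, ?_⟩, ?_⟩
  · obtain ⟨h1, h2, h3, h4⟩ := hp
    intro i j hij
    fin_cases i <;> fin_cases j <;> simp_all [disjoint_comm]
  · intro v
    have : v ∈ X ∪ Y ∪ Z := by rw [hp.2.2.2]; simp
    simp only [Finset.mem_union] at this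
    rcases this with (h | h) | h
    · exact ⟨0, h⟩
    · exact ⟨1, h⟩
    · exact ⟨2, h⟩
  · have f0 : Finset.univ.filter (fun j : Fin 3 => j ≠ 0) = {1, 2} := by decide
    have f1 : Finset.univ.filter (fun j : Fin 3 => j ≠ 1) = {0, 2} := by decide
    have f2 : Finset.univ.filter (fun j : Fin 3 => j ≠ 2) = {0, 1} := by decide
    have g0 : 12 * (eIn G X : ℤ) + 3 * (eIn G Y + eIn G Z) ≤ 2 * m := by omega
    have g1 : 12 * (eIn G Y : ℤ) + 3 * (eIn G X + eIn G Z) ≤ 2 * m := by omega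
    have g2 : 12 * (eIn G Z : ℤ) + 3 * (eIn G X + eIn G Y) ≤ 2 * m := by omega
    have g0' : 12 * (eIn G X : ℝ) + 3 * (eIn G Y + eIn G Z) ≤ 2 * m := by exact_mod_cast g0
    have g1' : 12 * (eIn G Y : ℝ) + 3 * (eIn G X + eIn G Z) ≤ 2 * m := by exact_mod_cast g1
    have g2' : 12 * (eIn G Z : ℝ) + 3 * (eIn G X + eIn G Y) ≤ 2 * m := by exact_mod_cast g2
    intro i
    fin_cases i
    · show 6 * (eIn G X : ℝ) + (3 / 2) * ∑ j ∈ Finset.univ.filter (fun j : Fin 3 => j ≠ 0), (eIn G (![X, Y, Z] j) : ℝ) ≤ m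
      rw [f0, Finset.sum_pair (by decide)]
      simp only [Matrix.cons_val]
      linarith
    · show 6 * (eIn G Y : ℝ) + (3 / 2) * ∑ j ∈ Finset.univ.filter (fun j : Fin 3 => j ≠ 1), (eIn G (![X, Y, Z] j) : ℝ) ≤ m
      rw [f1, Finset.sum_pair (by decide)]
      simp only [Matrix.cons_val]
      linarith
    · show 6 * (eIn G Z : ℝ) + (3 / 2) * ∑ j ∈ Finset.univ.filter (fun j : Fin 3 => j ≠ 2), (eIn G (![X, Y, Z] j) : ℝ) ≤ m
      rw [f2, Finset.sum_pair (by decide)]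
      simp only [Matrix.cons_val]
      linarith
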